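/- The logic iM, the intuitionistic monotone modal logic axiomatized over IPC by □(φ∧ψ)→□φ∧□ψ and the monotonicity rule (from φ→ψ and ψ→φ infer □φ→□ψ), has the uniform Lyndon interpolation property: for every formula φ, atom p, and polarity ∘∈{+,−}, there exist p∘-free formulas ∃∘p φ and ∀∘p φ with V†(∃∘p φ)⊆V†(φ) and V†(∀∘p φ)⊆V†(φ) for †∈{+,−}, such that iM⊢φ→∃∘p φ; for every p∘-free ψ with iM⊢φ→ψ we have iM⊢∃∘p φ→ψ; iM⊢∀∘p φ→φ; and for every p∘-free ψ with iM⊢ψ→φ we have iM⊢ψ→∀∘p φ. -/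

import Mathlib

/-- Formulas of intuitionistic (monotone) modal logic over atoms `ℕ`,
with conjunction, disjunction, implication, falsum and a box modality. -/
inductive Fm : Type where
  | atom : ℕ → Fm
  | bot  : Fm
  | and  : Fm → Fm → Fm
  | or   : Fm → Fm → Fm
  | imp  : Fm → Fm → Fm
  | box  : Fm → Fm
deriving DecidableEq

/-- `⊤` as the abbreviation `⊥ → ⊥`. -/
def Fm.top : Fm := Fm.imp Fm.bot Fm.bot
/-- Polarity-indexed variable sets: `Vb true φ = V⁺(φ)` and `Vb false φ = V⁻(φ)`. -/
def Vb : Bool → Fm → Finset ℕ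
  | b, .atom q => if b then {q} else ∅
  | _, .bot => ∅
  | b, .and φ ψ => Vb b φ ∪ Vb b ψ
  | b, .or φ ψ => Vb b φ ∪ Vb b ψ
  | b, .imp φ ψ => Vb (!b) φ ∪ Vb b ψ
  | b, .box φ => Vb b φ
/-- The sequent calculus `G3iM^w` for intuitionistic monotone modal logic:
single-conclusion sequents with a multiset antecedent. -/
inductive G3 : Multiset Fm → Fm → Prop
  | ax (Γ : Multiset Fm) (p : ℕ) : G3 (Fm.atom p ::ₘ Γ) (Fm.atom p)
  | lbot (Γ : Multiset Fm) (φ : Fm) : G3 (Fm.bot ::ₘ Γ) φ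
  | land (Γ : Multiset Fm) (φ ψ θ : Fm) :
      G3 (φ ::ₘ ψ ::ₘ Γ) θ → G3 (φ.and ψ ::ₘ Γ) θ
  | rand (Γ : Multiset Fm) (φ ψ : Fm) : G3 Γ φ → G3 Γ ψ → G3 Γ (φ.and ψ)
  | lor (Γ : Multiset Fm) (φ ψ θ : Fm) :
      G3 (φ ::ₘ Γ) θ → G3 (ψ ::ₘ Γ) θ → G3 (φ.or ψ ::ₘ Γ) θ
  | ror₁ (Γ : Multiset Fm) (φ ψ : Fm) : G3 Γ φ → G3 Γ (φ.or ψ)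
  | ror₂ (Γ : Multiset Fm) (φ ψ : Fm) : G3 Γ ψ → G3 Γ (φ.or ψ)
  | limp (Γ : Multiset Fm) (φ ψ θ : Fm) :
      G3 (φ.imp ψ ::ₘ Γ) φ → G3 (ψ ::ₘ Γ) θ → G3 (φ.imp ψ ::ₘ Γ) θ
  | rimp (Γ : Multiset Fm) (φ ψ : Fm) : G3 (φ ::ₘ Γ) ψ → G3 Γ (φ.imp ψ)
  | m (Γ : Multiset Fm) (φ ψ : Fm) : G3 {φ} ψ → G3 (φ.box ::ₘ Γ) (ψ.box)

/-- The intuitionistic monotone modal logic `iM`: `φ` is a theorem iff the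
sequent `⇒ φ` is derivable in `G3iM^w`. -/
def iM (φ : Fm) : Prop := G3 0 φ

/-! Cut is admissible in `G3`, and uniform interpolants can be found for any set `K` of signed atoms
that may be kept, by recursion on the weight of sequents: `∃K Γ` is the strongest consequence of
the context `Γ` over `K`, and `∀K (Γ ⇒ φ)` the weakest formula over `K` which, added to `Γ`,
yields `φ`. As long as a formula of `Γ` can be replaced by simpler ones using an invertible rule,
including currying of `(a ∧ b) → c` and splitting of `(a ∨ b) → c`, the interpolants are put
together from those of the premises. Once this is exhausted, in a derivation of `Γ, Δ ⇒ φ` with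
side formulas `Δ`, the context `Γ` meets `Δ` only in sequents derived by a rule on the right, whose
succedent is `φ` or the antecedent of an implication in `Γ`. Hence `∃K Γ` can be taken to be a
conjunction over the formulas of `Γ`, in which `a → b` contributes `∀ → ∃`, the two interpolants of
its premises with `∀` over the flipped signs. Likewise `∀K (Γ ⇒ φ)` is an implication from the
`∃`-interpolant of `Γ` over the flipped signs to a disjunction over the ways in which the
derivation can end. The recursion terminates on `(a → b) → c` because, once `a` is assumed, it is
equivalent to `b → c`. -/

local infix:50 " ⊢ " => G3

variable {Γ Δ Θ : Multiset Fm} {φ ψ θ χ : Fm} {K L : Set (Bool × ℕ)}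

/-! ### Structural rules and cut -/

theorem cons_subset_cons_cons (h : Γ ⊆ φ ::ₘ Δ) (ψ : Fm) : ψ ::ₘ Γ ⊆ φ ::ₘ ψ ::ₘ Δ :=
  Multiset.cons_swap ψ φ Δ ▸ Multiset.cons_subset_cons h

theorem add_subset_add_left (h : Δ ⊆ Θ) : Γ + Δ ⊆ Γ + Θ := fun _ hφ =>
  Multiset.mem_add.2 ((Multiset.mem_add.1 hφ).imp_right fun hφ => h hφ)

/-- `Subsumed Γ φ`: the context `Γ` contains `φ`, or enough of the formulas into which the left
rules decompose `φ` to make `φ` redundant next to `Γ`. Reading a derivation along this relation is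
weakening, contraction and inversion of the left rules at once. -/
inductive Subsumed (Γ : Multiset Fm) : Fm → Prop
  | mem {φ : Fm} : φ ∈ Γ → Subsumed Γ φ
  | and {φ ψ : Fm} : Subsumed Γ φ → Subsumed Γ ψ → Subsumed Γ (φ.and ψ)
  | or_left {φ ψ : Fm} : Subsumed Γ φ → Subsumed Γ (φ.or ψ)
  | or_right {φ ψ : Fm} : Subsumed Γ ψ → Subsumed Γ (φ.or ψ)
  | imp {φ ψ : Fm} : Subsumed Γ ψ → Subsumed Γ (φ.imp ψ)

namespace Subsumed

theorem trans (h : Subsumed Γ φ) (hΓ : ∀ γ ∈ Γ, Subsumed Δ γ) : Subsumed Δ φ := by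
  induction h with
  | mem h => exact hΓ _ h
  | and _ _ ih₁ ih₂ => exact .and ih₁ ih₂
  | or_left _ ih => exact .or_left ih
  | or_right _ ih => exact .or_right ih
  | imp _ ih => exact .imp ih

theorem head : Subsumed (φ ::ₘ Γ) φ := .mem (Multiset.mem_cons_self φ Γ)

theorem tail (h : Subsumed Γ φ) (ψ : Fm) : Subsumed (ψ ::ₘ Γ) φ :=
  h.trans fun _ hγ => .mem (Multiset.mem_cons_of_mem hγ)

theorem cons (h : ∀ γ ∈ Γ, Subsumed Δ γ) (φ : Fm) : ∀ γ ∈ φ ::ₘ Γ, Subsumed (φ ::ₘ Δ) γ :=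
  Multiset.forall_mem_cons.2 ⟨head, fun γ hγ => (h γ hγ).tail φ⟩

theorem trans_cons (h : ∀ γ ∈ Γ, Subsumed (φ ::ₘ Δ) γ) (hφ : Subsumed Θ φ) (hΔ : Δ ⊆ Θ) :
    ∀ γ ∈ Γ, Subsumed Θ γ :=
  fun γ hγ => (h γ hγ).trans (Multiset.forall_mem_cons.2 ⟨hφ, fun _ hδ => .mem (hΔ hδ)⟩)

end Subsumed

namespace G3

theorem atom_of_mem {q : ℕ} (h : Fm.atom q ∈ Γ) : Γ ⊢ .atom q := by
  obtain ⟨Γ, rfl⟩ := Multiset.exists_cons_of_mem h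
  exact ax Γ q

theorem of_bot_mem (h : Fm.bot ∈ Γ) : Γ ⊢ θ := by
  obtain ⟨Γ, rfl⟩ := Multiset.exists_cons_of_mem h
  exact lbot Γ θ

theorem box_of_mem (h : φ.box ∈ Γ) (hψ : {φ} ⊢ ψ) : Γ ⊢ ψ.box := by
  obtain ⟨Γ, rfl⟩ := Multiset.exists_cons_of_mem h
  exact m Γ φ ψ hψ

theorem of_subsumed (h : Γ ⊢ θ) (hΓ : ∀ γ ∈ Γ, Subsumed Δ γ) : Δ ⊢ θ := by
  induction h generalizing Δ with
  | ax Γ p =>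
    cases hΓ _ (Multiset.mem_cons_self _ Γ) with | mem h => exact atom_of_mem h
  | lbot Γ φ =>
    cases hΓ _ (Multiset.mem_cons_self _ Γ) with | mem h => exact of_bot_mem h
  | land Γ φ ψ θ _ ih =>
    obtain ⟨h, hΓ⟩ := Multiset.forall_mem_cons.1 hΓ
    simp only [Multiset.forall_mem_cons] at ih
    cases h with
    | and hφ hψ => exact ih ⟨hφ, hψ, hΓ⟩
    | mem h =>
      obtain ⟨Δ, rfl⟩ := Multiset.exists_cons_of_mem h
      exact land Δ φ ψ θ (ih ⟨.head, .tail .head φ,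
        .trans_cons hΓ (.and .head (.tail .head φ)) (by grind [Multiset.subset_iff])⟩)
  | rand Γ φ ψ _ _ ih₁ ih₂ => exact rand Δ φ ψ (ih₁ hΓ) (ih₂ hΓ)
  | lor Γ φ ψ θ _ _ ih₁ ih₂ =>
    obtain ⟨h, hΓ⟩ := Multiset.forall_mem_cons.1 hΓ
    simp only [Multiset.forall_mem_cons] at ih₁ ih₂
    cases h with
    | or_left hφ => exact ih₁ ⟨hφ, hΓ⟩
    | or_right hψ => exact ih₂ ⟨hψ, hΓ⟩
    | mem h =>
      obtain ⟨Δ, rfl⟩ := Multiset.exists_cons_of_mem h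
      exact lor Δ φ ψ θ
        (ih₁ ⟨.head, .trans_cons hΓ (.or_left .head) (Multiset.subset_cons Δ φ)⟩)
        (ih₂ ⟨.head, .trans_cons hΓ (.or_right .head) (Multiset.subset_cons Δ ψ)⟩)
  | ror₁ Γ φ ψ _ ih => exact ror₁ Δ φ ψ (ih hΓ)
  | ror₂ Γ φ ψ _ ih => exact ror₂ Δ φ ψ (ih hΓ)
  | limp Γ φ ψ θ _ _ ih₁ ih₂ =>
    obtain ⟨h, hΓ'⟩ := Multiset.forall_mem_cons.1 hΓ
    simp only [Multiset.forall_mem_cons (s := Γ) (a := ψ)] at ih₂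
    cases h with
    | imp hψ => exact ih₂ ⟨hψ, hΓ'⟩
    | mem h =>
      obtain ⟨Δ, rfl⟩ := Multiset.exists_cons_of_mem h
      exact limp Δ φ ψ θ (ih₁ hΓ)
        (ih₂ ⟨.head, .trans_cons hΓ' (.imp .head) (Multiset.subset_cons Δ ψ)⟩)
  | rimp Γ φ ψ _ ih => exact rimp Δ φ ψ (ih (Subsumed.cons hΓ φ))
  | m Γ φ ψ h _ =>
    cases hΓ _ (Multiset.mem_cons_self _ Γ) with | mem h' => exact box_of_mem h' h

theorem mono (h : Γ ⊢ θ) (hΓ : Γ ⊆ Δ) : Δ ⊢ θ :=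
  h.of_subsumed fun _ hγ => .mem (hΓ hγ)

theorem weaken (h : Γ ⊢ θ) (φ : Fm) : φ ::ₘ Γ ⊢ θ :=
  h.mono (Multiset.subset_cons Γ φ)

theorem invert_and (h : φ.and ψ ::ₘ Γ ⊢ θ) : φ ::ₘ ψ ::ₘ Γ ⊢ θ :=
  h.of_subsumed <| Multiset.forall_mem_cons.2
    ⟨.and .head (.tail .head φ), fun _ hγ => .tail (.tail (.mem hγ) ψ) φ⟩

theorem invert_or_left (h : φ.or ψ ::ₘ Γ ⊢ θ) : φ ::ₘ Γ ⊢ θ :=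
  h.of_subsumed <| Multiset.forall_mem_cons.2 ⟨.or_left .head, fun _ hγ => .tail (.mem hγ) φ⟩

theorem invert_or_right (h : φ.or ψ ::ₘ Γ ⊢ θ) : ψ ::ₘ Γ ⊢ θ :=
  h.of_subsumed <| Multiset.forall_mem_cons.2 ⟨.or_right .head, fun _ hγ => .tail (.mem hγ) ψ⟩

theorem invert_imp (h : φ.imp ψ ::ₘ Γ ⊢ θ) : ψ ::ₘ Γ ⊢ θ :=
  h.of_subsumed <| Multiset.forall_mem_cons.2 ⟨.imp .head, fun _ hγ => .tail (.mem hγ) ψ⟩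

theorem contract (h : φ ::ₘ Γ ⊢ θ) (hφ : φ ∈ Γ) : Γ ⊢ θ :=
  h.mono (Multiset.cons_subset.2 ⟨hφ, Multiset.Subset.refl Γ⟩)

theorem of_and_mem (h : φ.and ψ ∈ Γ) (hθ : φ ::ₘ ψ ::ₘ Γ ⊢ θ) : Γ ⊢ θ :=
  (land Γ φ ψ θ hθ).contract h

theorem of_or_mem (h : φ.or ψ ∈ Γ) (hφ : φ ::ₘ Γ ⊢ θ) (hψ : ψ ::ₘ Γ ⊢ θ) : Γ ⊢ θ :=
  (lor Γ φ ψ θ hφ hψ).contract h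

theorem of_imp_mem (h : φ.imp ψ ∈ Γ) (hφ : Γ ⊢ φ) (hψ : ψ ::ₘ Γ ⊢ θ) : Γ ⊢ θ :=
  (limp Γ φ ψ θ (hφ.weaken _) hψ).contract h

theorem identity : ∀ {φ : Fm} {Γ : Multiset Fm}, φ ∈ Γ → Γ ⊢ φ
  | .atom _, _, h => atom_of_mem h
  | .bot, _, h => of_bot_mem h
  | .and φ ψ, Γ, h => of_and_mem h (rand _ φ ψ (identity (by simp)) (identity (by simp)))
  | .or φ ψ, Γ, h =>
    of_or_mem h (ror₁ _ φ ψ (identity (by simp))) (ror₂ _ φ ψ (identity (by simp)))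
  | .imp φ ψ, Γ, h => rimp Γ φ ψ <|
    of_imp_mem (Multiset.mem_cons_of_mem h) (identity (by simp)) (identity (by simp))
  | .box φ, Γ, h => box_of_mem h (identity (by simp))

theorem head (φ : Fm) (Γ : Multiset Fm) : φ ::ₘ Γ ⊢ φ :=
  identity (Multiset.mem_cons_self φ Γ)

/-- `LeftAdmissible Γ φ`: in every context extending `Γ`, the left rule for `φ` is admissible
without `φ` being there. It is the invariant of cut elimination: deriving `φ` from `Γ` by a right
rule establishes it, given cut for the immediate subformulas of `φ`. -/
def LeftAdmissible (Γ : Multiset Fm) : Fm → Prop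
  | .atom q => ∀ Δ, Γ ⊆ Δ → Δ ⊢ .atom q
  | .bot => ∀ Δ θ, Γ ⊆ Δ → Δ ⊢ θ
  | .and φ ψ => ∀ Δ θ, Γ ⊆ Δ → φ ::ₘ ψ ::ₘ Δ ⊢ θ → Δ ⊢ θ
  | .or φ ψ => ∀ Δ θ, Γ ⊆ Δ → φ ::ₘ Δ ⊢ θ → ψ ::ₘ Δ ⊢ θ → Δ ⊢ θ
  | .imp φ ψ => ∀ Δ θ, Γ ⊆ Δ → Δ ⊢ φ → ψ ::ₘ Δ ⊢ θ → Δ ⊢ θ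
  | .box φ => ∀ Δ ψ, Γ ⊆ Δ → {φ} ⊢ ψ → Δ ⊢ ψ.box

theorem LeftAdmissible.cut (hφ : LeftAdmissible Γ φ) (h : Δ ⊢ θ) (hΓ : Γ ⊆ Θ)
    (hΔ : Δ ⊆ φ ::ₘ Θ) : Θ ⊢ θ := by
  have hcons {Θ : Multiset Fm} (hΓ : Γ ⊆ Θ) (a : Fm) : Γ ⊆ a ::ₘ Θ :=
    Multiset.Subset.trans hΓ (Multiset.subset_cons Θ a)
  induction h generalizing Θ with
  | ax Δ p =>
    obtain rfl | h := Multiset.mem_cons.1 (hΔ (Multiset.mem_cons_self _ Δ))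
    · exact hφ Θ hΓ
    · exact atom_of_mem h
  | lbot Δ θ =>
    obtain rfl | h := Multiset.mem_cons.1 (hΔ (Multiset.mem_cons_self _ Δ))
    · exact hφ Θ θ hΓ
    · exact of_bot_mem h
  | land Δ a b θ _ ih =>
    obtain ⟨hab, hΔ⟩ := Multiset.cons_subset.1 hΔ
    have h := ih (hcons (hcons hΓ b) a) (cons_subset_cons_cons (cons_subset_cons_cons hΔ b) a)
    obtain rfl | hab := Multiset.mem_cons.1 hab
    · exact hφ Θ θ hΓ h
    · exact of_and_mem hab h
  | rand Δ a b _ _ ih₁ ih₂ => exact rand Θ a b (ih₁ hΓ hΔ) (ih₂ hΓ hΔ)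
  | lor Δ a b θ _ _ ih₁ ih₂ =>
    obtain ⟨hab, hΔ⟩ := Multiset.cons_subset.1 hΔ
    have h₁ := ih₁ (hcons hΓ a) (cons_subset_cons_cons hΔ a)
    have h₂ := ih₂ (hcons hΓ b) (cons_subset_cons_cons hΔ b)
    obtain rfl | hab := Multiset.mem_cons.1 hab
    · exact hφ Θ θ hΓ h₁ h₂
    · exact of_or_mem hab h₁ h₂
  | ror₁ Δ a b _ ih => exact ror₁ Θ a b (ih hΓ hΔ)
  | ror₂ Δ a b _ ih => exact ror₂ Θ a b (ih hΓ hΔ)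
  | limp Δ a b θ _ _ ih₁ ih₂ =>
    have h₁ := ih₁ hΓ hΔ
    obtain ⟨hab, hΔ⟩ := Multiset.cons_subset.1 hΔ
    have h₂ := ih₂ (hcons hΓ b) (cons_subset_cons_cons hΔ b)
    obtain rfl | hab := Multiset.mem_cons.1 hab
    · exact hφ Θ θ hΓ h₁ h₂
    · exact of_imp_mem hab h₁ h₂
  | rimp Δ a b _ ih => exact rimp Θ a b (ih (hcons hΓ a) (cons_subset_cons_cons hΔ a))
  | m Δ a b h _ =>
    obtain rfl | h' := Multiset.mem_cons.1 (hΔ (Multiset.mem_cons_self _ Δ))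
    · exact hφ Θ b hΓ h
    · exact box_of_mem h' h

theorem cut_of_cut_lt (hφ : Γ ⊢ φ) (h : φ ::ₘ Γ ⊢ θ)
    (hcut : ∀ {ψ : Fm} {Δ χ}, sizeOf ψ < sizeOf φ → Δ ⊢ ψ → ψ ::ₘ Δ ⊢ χ → Δ ⊢ χ) : Γ ⊢ θ := by
  have of_leftAdmissible {Γ φ} (hφ : LeftAdmissible Γ φ) (h : φ ::ₘ Γ ⊢ θ) : Γ ⊢ θ :=
    hφ.cut h (Multiset.Subset.refl _) (Multiset.Subset.refl _)
  induction hφ with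
  | ax Γ p => exact h.contract (Multiset.mem_cons_self _ Γ)
  | lbot Γ φ => exact lbot Γ θ
  | land Γ a b φ _ ih =>
    refine land Γ a b θ (ih ?_ hcut)
    rw [Multiset.cons_swap φ, Multiset.cons_swap φ]
    exact (Multiset.cons_swap φ _ Γ ▸ h).invert_and
  | lor Γ a b φ _ _ ih₁ ih₂ =>
    rw [Multiset.cons_swap] at h
    refine lor Γ a b θ (ih₁ ?_ hcut) (ih₂ ?_ hcut) <;> rw [Multiset.cons_swap]
    exacts [h.invert_or_left, h.invert_or_right]
  | limp Γ a b φ ha _ _ ih =>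
    rw [Multiset.cons_swap] at h
    refine limp Γ a b θ ha (ih ?_ hcut)
    exact Multiset.cons_swap φ b Γ ▸ h.invert_imp
  | rand Γ a b ha hb _ _ =>
    refine of_leftAdmissible (φ := a.and b) (fun Δ χ hΔ hχ => ?_) h
    exact hcut (by simp) (hb.mono hΔ) <|
      hcut (by simp only [Fm.and.sizeOf_spec]; omega) ((ha.mono hΔ).weaken b) hχ
  | ror₁ Γ a b ha _ =>
    refine of_leftAdmissible (φ := a.or b) (fun Δ χ hΔ hχ _ => ?_) h
    exact hcut (by simp only [Fm.or.sizeOf_spec]; omega) (ha.mono hΔ) hχ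
  | ror₂ Γ a b hb _ =>
    refine of_leftAdmissible (φ := a.or b) (fun Δ χ hΔ _ hχ => ?_) h
    exact hcut (by simp) (hb.mono hΔ) hχ
  | rimp Γ a b hb _ =>
    refine of_leftAdmissible (φ := a.imp b) (fun Δ χ hΔ ha hχ => ?_) h
    have hb : Δ ⊢ b := hcut (by simp only [Fm.imp.sizeOf_spec]; omega) ha
      (hb.mono (Multiset.cons_subset_cons hΔ))
    exact hcut (by simp) hb hχ
  | m Γ a b hab _ =>
    refine of_leftAdmissible (φ := b.box) (fun Δ c hΔ hc => ?_) h
    exact box_of_mem (hΔ (Multiset.mem_cons_self _ Γ))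
      (hcut (by simp) hab (hc.mono (by simp)))

theorem cut (hφ : Γ ⊢ φ) (h : φ ::ₘ Γ ⊢ θ) : Γ ⊢ θ := by
  induction hn : sizeOf φ using Nat.strong_induction_on generalizing φ Γ θ with
  | _ n ih => exact cut_of_cut_lt hφ h fun hψ h₁ h₂ => ih _ (hn ▸ hψ) h₁ h₂ rfl

theorem cut_add (hΔ : ∀ δ ∈ Δ, Γ ⊢ δ) (h : Δ + Γ ⊢ θ) : Γ ⊢ θ := by
  induction Δ using Multiset.induction_on with
  | empty => simpa using h
  | cons δ Δ ih =>
    obtain ⟨hδ, hΔ⟩ := Multiset.forall_mem_cons.1 hΔ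
    rw [Multiset.cons_add] at h
    exact ih hΔ ((hδ.mono Multiset.subset_add_right).cut h)

theorem subst (h : Γ ⊢ θ) (hΓ : ∀ γ ∈ Γ, Δ ⊢ γ) : Δ ⊢ θ :=
  cut_add hΓ (h.mono Multiset.subset_add_left)

theorem trans (hφ : Γ ⊢ φ) (h : {φ} ⊢ θ) : Γ ⊢ θ :=
  h.subst (by simpa using hφ)

theorem and_iff : Γ ⊢ φ.and ψ ↔ Γ ⊢ φ ∧ Γ ⊢ ψ :=
  ⟨fun h => ⟨h.cut (land Γ φ ψ φ (head φ _)), h.cut (land Γ φ ψ ψ ((head ψ Γ).weaken φ))⟩,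
    fun h => rand Γ φ ψ h.1 h.2⟩

theorem imp_iff : Γ ⊢ φ.imp ψ ↔ φ ::ₘ Γ ⊢ ψ :=
  ⟨fun h => (h.weaken φ).cut (limp _ φ ψ ψ ((head φ Γ).weaken _) (head ψ _)), rimp Γ φ ψ⟩

theorem mp (h : Γ ⊢ φ.imp ψ) (hφ : Γ ⊢ φ) : Γ ⊢ ψ :=
  hφ.cut (imp_iff.1 h)

theorem top (Γ : Multiset Fm) : Γ ⊢ .top :=
  rimp Γ .bot .bot (lbot Γ .bot)

theorem box_mono (h : {φ} ⊢ ψ) : φ.box ::ₘ Γ ⊢ ψ.box :=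
  m Γ φ ψ h

end G3

namespace Fm

/-- The conjunction of a list of formulas, `⊤` if the list is empty. -/
def conj : List Fm → Fm
  | [] => top
  | φ :: l => φ.and (conj l)

/-- The disjunction of a list of formulas, `⊥` if the list is empty. -/
def disj : List Fm → Fm
  | [] => bot
  | φ :: l => φ.or (disj l)

end Fm

namespace G3

theorem conj_iff {l : List Fm} : Γ ⊢ .conj l ↔ ∀ φ ∈ l, Γ ⊢ φ := by
  induction l with
  | nil => simpa [Fm.conj] using top Γ
  | cons φ l ih => rw [List.forall_mem_cons, ← ih, Fm.conj, and_iff]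

theorem disj_of_mem {l : List Fm} (hφ : φ ∈ l) (h : Γ ⊢ φ) : Γ ⊢ .disj l := by
  induction l with
  | nil => cases hφ
  | cons ψ l ih =>
    obtain rfl | hφ := List.mem_cons.1 hφ
    · exact ror₁ Γ φ (.disj l) h
    · exact ror₂ Γ ψ (.disj l) (ih hφ)

theorem disj_left {l : List Fm} (h : ∀ φ ∈ l, φ ::ₘ Γ ⊢ θ) : .disj l ::ₘ Γ ⊢ θ := by
  induction l with
  | nil => exact lbot Γ θ
  | cons φ l ih =>
    obtain ⟨hφ, hl⟩ := List.forall_mem_cons.1 h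
    exact lor Γ φ (.disj l) θ hφ (ih hl)

end G3

/-! ### Signed atoms -/

/-- The set of signed atoms with the opposite signs. -/
def flipSigns (K : Set (Bool × ℕ)) : Set (Bool × ℕ) := {s | (!s.1, s.2) ∈ K}

@[simp]
theorem flipSigns_flipSigns (K : Set (Bool × ℕ)) : flipSigns (flipSigns K) = K := by
  simp [flipSigns]

@[simp]
theorem flipSigns_empty : flipSigns ∅ = ∅ := rfl

@[simp]
theorem flipSigns_union (K L : Set (Bool × ℕ)) :
    flipSigns (K ∪ L) = flipSigns K ∪ flipSigns L := rfl

@[simp]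
theorem flipSigns_inter (K L : Set (Bool × ℕ)) :
    flipSigns (K ∩ L) = flipSigns K ∩ flipSigns L := rfl

theorem flipSigns_subset_comm : flipSigns K ⊆ L ↔ K ⊆ flipSigns L :=
  ⟨fun h s hs => h (by simpa [flipSigns] using hs),
    fun h s hs => by simpa [flipSigns] using h hs⟩

/-- The signed atoms of `φ`: the sign `true` marks positive occurrences, `false` negative ones.
It packages `V⁺(φ)` and `V⁻(φ)` into one set. -/
def Fm.signedAtoms (φ : Fm) : Set (Bool × ℕ) := {s | s.2 ∈ Vb s.1 φ}

/-- The signed atoms occurring in some formula of a context. -/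
def contextAtoms (Γ : Multiset Fm) : Set (Bool × ℕ) := ⋃ γ ∈ Γ, γ.signedAtoms

namespace Fm

@[simp]
theorem signedAtoms_atom (q : ℕ) : (atom q).signedAtoms = {(true, q)} := by
  ext ⟨b, r⟩; cases b <;> simp [signedAtoms, Vb]

@[simp]
theorem signedAtoms_bot : bot.signedAtoms = ∅ := by simp [signedAtoms, Vb]

@[simp]
theorem signedAtoms_and (φ ψ : Fm) :
    (φ.and ψ).signedAtoms = φ.signedAtoms ∪ ψ.signedAtoms := by
  ext; simp [signedAtoms, Vb]

@[simp]
theorem signedAtoms_or (φ ψ : Fm) :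
    (φ.or ψ).signedAtoms = φ.signedAtoms ∪ ψ.signedAtoms := by
  ext; simp [signedAtoms, Vb]

@[simp]
theorem signedAtoms_imp (φ ψ : Fm) :
    (φ.imp ψ).signedAtoms = flipSigns φ.signedAtoms ∪ ψ.signedAtoms := by
  ext; simp [signedAtoms, Vb, flipSigns]

@[simp]
theorem signedAtoms_box (φ : Fm) : φ.box.signedAtoms = φ.signedAtoms := by
  simp [signedAtoms, Vb]

@[simp]
theorem signedAtoms_top : top.signedAtoms = ∅ := by simp [top, flipSigns]

theorem signedAtoms_conj_subset {l : List Fm} (h : ∀ φ ∈ l, φ.signedAtoms ⊆ K) :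
    (conj l).signedAtoms ⊆ K := by
  induction l with
  | nil => simp [conj]
  | cons φ l ih => simp_all [conj]

theorem signedAtoms_disj_subset {l : List Fm} (h : ∀ φ ∈ l, φ.signedAtoms ⊆ K) :
    (disj l).signedAtoms ⊆ K := by
  induction l with
  | nil => simp [disj]
  | cons φ l ih => simp_all [disj]

end Fm

@[simp]
theorem contextAtoms_zero : contextAtoms 0 = ∅ := by simp [contextAtoms]

@[simp]
theorem contextAtoms_cons (φ : Fm) (Γ : Multiset Fm) :
    contextAtoms (φ ::ₘ Γ) = φ.signedAtoms ∪ contextAtoms Γ := by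
  ext; simp [contextAtoms]

@[simp]
theorem contextAtoms_singleton (φ : Fm) : contextAtoms {φ} = φ.signedAtoms := by
  simp [contextAtoms]

@[simp]
theorem contextAtoms_add (Γ Δ : Multiset Fm) :
    contextAtoms (Γ + Δ) = contextAtoms Γ ∪ contextAtoms Δ := by
  ext; simp [contextAtoms, or_and_right, exists_or]

theorem signedAtoms_subset_contextAtoms (h : φ ∈ Γ) : φ.signedAtoms ⊆ contextAtoms Γ :=
  Set.subset_biUnion_of_mem (u := Fm.signedAtoms) h

/-! ### Interpolants of contexts and sequents -/

/-- Complexity of formulas for the termination measure. The constants are chosen so that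
`φ → (ψ → χ)` is simpler than `(φ ∧ ψ) → χ`, and `φ → χ`, `ψ → χ` simpler than `(φ ∨ ψ) → χ`. -/
def Fm.degree : Fm → ℕ
  | .atom _ => 1
  | .bot => 1
  | .and φ ψ => φ.degree + ψ.degree + 2
  | .or φ ψ => φ.degree + ψ.degree + 1
  | .imp φ ψ => φ.degree + ψ.degree + 1
  | .box φ => φ.degree + 1

/-- Termination measure for sequents, an additive version of the multiset ordering: trading a
formula for at most three simpler ones decreases the weight. -/
def weight (Γ : Multiset Fm) : ℕ := (Γ.map fun γ => 4 ^ γ.degree).sum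

theorem weight_cons (φ : Fm) (Γ : Multiset Fm) : weight (φ ::ₘ Γ) = 4 ^ φ.degree + weight Γ := by
  simp [weight]

theorem weight_add (Γ Δ : Multiset Fm) : weight (Γ + Δ) = weight Γ + weight Δ := by
  simp [weight]

theorem weight_lt_of_degree_lt {N : Multiset Fm} (hcard : N.card ≤ 3)
    (hN : ∀ ψ ∈ N, ψ.degree < φ.degree) : weight N < 4 ^ φ.degree := by
  have h : 4 * weight N ≤ N.card * 4 ^ φ.degree := by
    rw [weight, ← Multiset.sum_map_mul_left, ← Multiset.card_map, ← smul_eq_mul]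
    refine Multiset.sum_le_card_nsmul _ _ (Multiset.forall_mem_map_iff.2 fun ψ hψ => ?_)
    rw [← pow_succ']
    exact Nat.pow_le_pow_right (by norm_num) (hN ψ hψ)
  have hpos : 0 < 4 ^ φ.degree := by positivity
  nlinarith

theorem weight_add_lt {N : Multiset Fm} (hcard : N.card ≤ 3)
    (hN : ∀ ψ ∈ N, ψ.degree < φ.degree) : weight (N + Γ) < weight (φ ::ₘ Γ) := by
  rw [weight_add, weight_cons]
  exact Nat.add_lt_add_right (weight_lt_of_degree_lt hcard hN) _

/-- `φ` follows from `Γ` by a last inference that is an axiom, a right rule or the modal rule, up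
to weakening. -/
def RightDerivable (Γ : Multiset Fm) : Fm → Prop
  | .atom q => .atom q ∈ Γ
  | .bot => False
  | .and φ ψ => Γ ⊢ φ ∧ Γ ⊢ ψ
  | .or φ ψ => Γ ⊢ φ ∨ Γ ⊢ ψ
  | .imp φ ψ => φ ::ₘ Γ ⊢ ψ
  | .box φ => ∃ δ : Fm, δ.box ∈ Γ ∧ {δ} ⊢ φ

theorem RightDerivable.derivable {φ : Fm} (h : RightDerivable Γ φ) : Γ ⊢ φ :=
  match φ, h with
  | .atom _, h => .atom_of_mem h
  | .and φ ψ, h => .rand Γ φ ψ h.1 h.2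
  | .or φ ψ, h => h.elim (.ror₁ Γ φ ψ) (.ror₂ Γ φ ψ)
  | .imp φ ψ, h => .rimp Γ φ ψ h
  | .box _, ⟨_, hδ, h⟩ => .box_of_mem hδ h

/-- `E` is a uniform interpolant `∃K Γ` of the context `Γ`: the strongest consequence of `Γ` whose
signed atoms lie in `K`. Strength is tested in the presence of side formulas `Δ`, which occur in
the antecedent and hence have their signed atoms in `flipSigns K`. -/
structure IsExistsInterpolant (K : Set (Bool × ℕ)) (Γ : Multiset Fm) (E : Fm) : Prop where
  atoms : E.signedAtoms ⊆ K ∩ contextAtoms Γ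
  derivable : Γ ⊢ E
  least : ∀ Δ χ, contextAtoms Δ ⊆ flipSigns K → χ.signedAtoms ⊆ K → Γ + Δ ⊢ χ → E ::ₘ Δ ⊢ χ

/-- `A` is a uniform interpolant `∀K (Γ ⇒ φ)` of the sequent `Γ ⇒ φ`: the weakest formula with
signed atoms in `K` that makes the sequent derivable when added to its antecedent. -/
structure IsForallInterpolant (K : Set (Bool × ℕ)) (Γ : Multiset Fm) (φ A : Fm) : Prop where
  atoms : A.signedAtoms ⊆ K ∩ (flipSigns (contextAtoms Γ) ∪ φ.signedAtoms)
  derivable : A ::ₘ Γ ⊢ φ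
  greatest : ∀ Δ, contextAtoms Δ ⊆ K → Γ + Δ ⊢ φ → Δ ⊢ A

/-- As `IsForallInterpolant`, but `B` only has to follow from those `Δ` for which the sequent has
a derivation ending on the right. -/
structure IsRightInterpolant (K : Set (Bool × ℕ)) (Γ : Multiset Fm) (φ B : Fm) : Prop where
  atoms : B.signedAtoms ⊆ K ∩ (flipSigns (contextAtoms Γ) ∪ φ.signedAtoms)
  derivable : B ::ₘ Γ ⊢ φ
  greatest : ∀ Δ, contextAtoms Δ ⊆ K → RightDerivable (Γ + Δ) φ → Δ ⊢ B

variable {A A₁ A₂ B E : Fm}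

namespace IsForallInterpolant

theorem and (hφ : IsForallInterpolant K Γ φ A₁) (hψ : IsForallInterpolant K Γ ψ A₂) :
    IsForallInterpolant K Γ (φ.and ψ) (A₁.and A₂) where
  atoms := by
    have := hφ.atoms
    have := hψ.atoms
    grind [Fm.signedAtoms_and]
  derivable := .land Γ A₁ A₂ _ <| .rand _ φ ψ
    (hφ.derivable.mono (Multiset.cons_subset_cons (Multiset.subset_cons Γ A₂)))
    (hψ.derivable.weaken A₁)
  greatest Δ hΔ h := by
    obtain ⟨h₁, h₂⟩ := G3.and_iff.1 h
    exact .rand Δ A₁ A₂ (hφ.greatest Δ hΔ h₁) (hψ.greatest Δ hΔ h₂)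

theorem imp (h : IsForallInterpolant K (φ ::ₘ Γ) ψ A) : IsForallInterpolant K Γ (φ.imp ψ) A where
  atoms := h.atoms.trans <| Set.inter_subset_inter_right K <| by
    grind [contextAtoms_cons, flipSigns_union, Fm.signedAtoms_imp]
  derivable := .rimp _ φ ψ (Multiset.cons_swap A φ Γ ▸ h.derivable)
  greatest Δ hΔ hφψ := h.greatest Δ hΔ (Multiset.cons_add φ Γ Δ ▸ G3.imp_iff.1 hφψ)

theorem congr (h : IsForallInterpolant K Δ φ A) (hΓ : ∀ δ ∈ Δ, Γ ⊢ δ) (hΔ : ∀ γ ∈ Γ, Δ ⊢ γ)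
    (hatoms : contextAtoms Δ ⊆ contextAtoms Γ) : IsForallInterpolant K Γ φ A where
  atoms := h.atoms.trans <| Set.inter_subset_inter_right K <|
    Set.union_subset_union_left _ fun _ hs => hatoms hs
  derivable := h.derivable.subst <| Multiset.forall_mem_cons.2
    ⟨.head A Γ, fun δ hδ => (hΓ δ hδ).weaken A⟩
  greatest Θ hΘ hφ := h.greatest Θ hΘ <| hφ.subst fun γ hγ => by
    obtain hγ | hγ := Multiset.mem_add.1 hγ
    · exact (hΔ γ hγ).mono Multiset.subset_add_left
    · exact .identity (Multiset.mem_add.2 (.inr hγ))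

theorem isRightInterpolant (h : IsForallInterpolant K Γ φ A) : IsRightInterpolant K Γ φ A where
  atoms := h.atoms
  derivable := h.derivable
  greatest Δ hΔ hφ := h.greatest Δ hΔ hφ.derivable

end IsForallInterpolant

/-! ### Decomposing contexts -/

/-- `Decomposes φ Ns`: an invertible left rule replaces `φ` by the contexts `Ns`, one for each
premise. The rules for implications whose antecedent is a conjunction or a disjunction are not
rules of `G3` itself. -/
inductive Decomposes : Fm → List (Multiset Fm) → Prop
  | bot : Decomposes .bot []
  | and (φ ψ : Fm) : Decomposes (φ.and ψ) [{φ, ψ}]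
  | or (φ ψ : Fm) : Decomposes (φ.or ψ) [{φ}, {ψ}]
  | and_imp (φ ψ χ : Fm) : Decomposes ((φ.and ψ).imp χ) [{φ.imp (ψ.imp χ)}]
  | or_imp (φ ψ χ : Fm) : Decomposes ((φ.or ψ).imp χ) [{φ.imp χ, ψ.imp χ}]

namespace Decomposes

variable {Ns : List (Multiset Fm)} {N : Multiset Fm}

theorem card_le (h : Decomposes φ Ns) : ∀ N ∈ Ns, N.card ≤ 2 := by
  cases h <;> simp

theorem degree_lt (h : Decomposes φ Ns) : ∀ N ∈ Ns, ∀ ψ ∈ N, ψ.degree < φ.degree := by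
  cases h <;> grind [Fm.degree, Multiset.insert_eq_cons, Multiset.mem_singleton]

theorem weight_lt (h : Decomposes φ Ns) (hN : N ∈ Ns) (Γ : Multiset Fm) :
    weight (N + Γ) < weight (φ ::ₘ Γ) :=
  weight_add_lt ((h.card_le N hN).trans (by norm_num)) (h.degree_lt N hN)

theorem contextAtoms_subset (h : Decomposes φ Ns) (hN : N ∈ Ns) :
    contextAtoms N ⊆ φ.signedAtoms := by
  revert N
  cases h <;> grind [Multiset.insert_eq_cons, contextAtoms_cons, contextAtoms_singleton,
    flipSigns_union, Fm.signedAtoms_and, Fm.signedAtoms_or, Fm.signedAtoms_imp]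

theorem derivable (h : Decomposes φ Ns) (hN : N ∈ Ns) : N ⊢ φ := by
  cases h with
  | bot => cases hN
  | and φ ψ =>
    obtain rfl := List.mem_singleton.1 hN
    exact .rand _ φ ψ (.identity (by simp)) (.identity (by simp))
  | or φ ψ =>
    obtain rfl | rfl := List.mem_pair.1 hN
    · exact .ror₁ _ φ ψ (.head φ 0)
    · exact .ror₂ _ φ ψ (.head ψ 0)
  | and_imp φ ψ χ =>
    obtain rfl := List.mem_singleton.1 hN
    have hψχ : φ ::ₘ ψ ::ₘ {φ.imp (ψ.imp χ)} ⊢ ψ.imp χ :=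
      .mp (.identity (by simp)) (.head φ _)
    exact .rimp _ _ χ (.land _ φ ψ χ (hψχ.mp (.identity (by simp))))
  | or_imp φ ψ χ =>
    obtain rfl := List.mem_singleton.1 hN
    exact .rimp _ _ χ <| .lor _ φ ψ χ
      (.mp (.identity (by simp)) (.head φ _)) (.mp (.identity (by simp)) (.head ψ _))

theorem left (h : Decomposes φ Ns) (hNs : ∀ N ∈ Ns, N + Γ ⊢ θ) : φ ::ₘ Γ ⊢ θ := by
  cases h with
  | bot => exact .lbot Γ θ
  | and φ ψ => exact .land Γ φ ψ θ (by simpa using hNs)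
  | or φ ψ =>
    obtain ⟨hφ, hψ⟩ : φ ::ₘ Γ ⊢ θ ∧ ψ ::ₘ Γ ⊢ θ := by simpa using hNs
    exact .lor Γ φ ψ θ hφ hψ
  | and_imp φ ψ χ =>
    have hcurry : (φ.and ψ).imp χ ::ₘ Γ ⊢ φ.imp (ψ.imp χ) := .rimp _ φ _ <| .rimp _ ψ χ <|
      .mp (.identity (by simp)) (.rand _ φ ψ (.identity (by simp)) (.head ψ _))
    have hθ : φ.imp (ψ.imp χ) ::ₘ Γ ⊢ θ := by simpa using hNs
    exact hcurry.cut (hθ.mono (Multiset.cons_subset_cons (Multiset.subset_cons Γ _)))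
  | or_imp φ ψ χ =>
    have hφχ : (φ.or ψ).imp χ ::ₘ Γ ⊢ φ.imp χ := .rimp _ φ χ <|
      .mp (.identity (by simp)) (.ror₁ _ φ ψ (.head φ _))
    have hψχ : (φ.or ψ).imp χ ::ₘ Γ ⊢ ψ.imp χ := .rimp _ ψ χ <|
      .mp (.identity (by simp)) (.ror₂ _ φ ψ (.head ψ _))
    have hθ : {φ.imp χ, ψ.imp χ} + Γ ⊢ θ := by simpa using hNs
    exact G3.cut_add (Δ := {φ.imp χ, ψ.imp χ}) (by simp [hφχ, hψχ])
      (Multiset.add_cons _ _ Γ ▸ hθ.weaken _)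

theorem derivable_add (h : Decomposes φ Ns) (hN : N ∈ Ns) (hθ : φ ::ₘ Γ ⊢ θ) : N + Γ ⊢ θ :=
  ((h.derivable hN).mono Multiset.subset_add_left).cut
    (hθ.mono (Multiset.cons_subset_cons Multiset.subset_add_right))

end Decomposes

theorem exists_isExistsInterpolant_of_decomposes {Ns : List (Multiset Fm)} (h : Decomposes φ Ns)
    (hNs : ∀ N ∈ Ns, ∃ E, IsExistsInterpolant K (N + Γ) E) :
    ∃ E, IsExistsInterpolant K (φ ::ₘ Γ) E := by
  have : Nonempty Fm := ⟨.bot⟩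
  choose! E hE using hNs
  refine ⟨.disj (Ns.map E), Fm.signedAtoms_disj_subset ?_, h.left fun N hN =>
    .disj_of_mem (List.mem_map_of_mem hN) (hE N hN).derivable, fun Δ χ hΔ hχ hθ =>
    .disj_left ?_⟩ <;> refine List.forall_mem_map.2 fun N hN => ?_
  · have := h.contextAtoms_subset hN
    refine (hE N hN).atoms.trans (Set.inter_subset_inter_right K ?_)
    rw [contextAtoms_add, contextAtoms_cons]
    exact Set.union_subset_union_left _ this
  · rw [Multiset.cons_add] at hθ
    exact (hE N hN).least Δ χ hΔ hχ (Multiset.add_assoc N Γ Δ ▸ h.derivable_add hN hθ)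

theorem exists_isForallInterpolant_of_decomposes {Ns : List (Multiset Fm)} (h : Decomposes φ Ns)
    (hNs : ∀ N ∈ Ns, ∃ A, IsForallInterpolant K (N + Γ) θ A) :
    ∃ A, IsForallInterpolant K (φ ::ₘ Γ) θ A := by
  have : Nonempty Fm := ⟨.bot⟩
  choose! A hA using hNs
  refine ⟨.conj (Ns.map A), Fm.signedAtoms_conj_subset ?_, ?_, fun Δ hΔ hθ => G3.conj_iff.2 ?_⟩
  · refine List.forall_mem_map.2 fun N hN => (hA N hN).atoms.trans ?_
    have := h.contextAtoms_subset hN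
    rw [contextAtoms_add, contextAtoms_cons]
    refine Set.inter_subset_inter_right K (Set.union_subset_union_left _ ?_)
    exact fun s hs => hs.imp_left fun h => this h
  · rw [Multiset.cons_swap]
    refine h.left fun N hN => (hA N hN).derivable.subst (Multiset.forall_mem_cons.2 ⟨?_, ?_⟩)
    · exact G3.conj_iff.1 (.identity (by simp)) _ (List.mem_map_of_mem hN)
    · exact fun γ hγ => .identity (by grind)
  · refine List.forall_mem_map.2 fun N hN => (hA N hN).greatest Δ hΔ ?_
    rw [Multiset.cons_add] at hθ
    exact Multiset.add_assoc N Γ Δ ▸ h.derivable_add hN hθ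

/-! ### Derivations from fully decomposed contexts -/

/-- A context to which no further decomposition applies. -/
def FullyDecomposed (Γ : Multiset Fm) : Prop := ∀ γ ∈ Γ, ∀ Ns, ¬Decomposes γ Ns

/-- `Γ + Δ ⇒ χ` has a derivation ending with an axiom, the modal rule or the left implication rule
for `γ`, where in the last case the antecedent of `γ` is itself derived on the right. -/
def LeftDerivable (Γ Δ : Multiset Fm) (χ : Fm) : Fm → Prop
  | .atom q => χ = .atom q
  | .imp φ _ => RightDerivable (Γ + Δ) φ ∧ Γ + Δ ⊢ χ
  | .box φ => ∃ ψ : Fm, χ = ψ.box ∧ {φ} ⊢ ψ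
  | _ => False

theorem LeftDerivable.derivable {γ : Fm} (hγ : γ ∈ Γ) (h : LeftDerivable Γ Δ χ γ) : Γ + Δ ⊢ χ := by
  have hmem : γ ∈ Γ + Δ := Multiset.mem_add.2 (.inl hγ)
  match γ with
  | .atom q =>
    obtain rfl : χ = .atom q := h
    exact .atom_of_mem hmem
  | .imp _ _ => exact h.2
  | .box _ =>
    obtain ⟨_, rfl, h⟩ := h
    exact .box_of_mem hmem h

/-- `E` may replace `Γ` in sequents over `K` that are derived by a left inference on `γ ∈ Γ`. -/
def AbsorbsLeft (K : Set (Bool × ℕ)) (Γ : Multiset Fm) (γ E : Fm) : Prop :=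
  ∀ Δ χ, contextAtoms Δ ⊆ flipSigns K → χ.signedAtoms ⊆ K → LeftDerivable Γ Δ χ γ → E ::ₘ Δ ⊢ χ

/-- `Γ + Δ ⇒ φ`, or the left premise for some implication in `Γ`, has a derivation ending on the
right. Only such sequents relate a fully decomposed `Γ` to the side formulas `Δ`. -/
def Critical (Γ Δ : Multiset Fm) (φ : Fm) : Prop :=
  RightDerivable (Γ + Δ) φ ∨ ∃ a b : Fm, a.imp b ∈ Γ ∧ RightDerivable (Γ + Δ) a

/-- The consequences of `Γ + Δ ⊢ φ` for a candidate `E` for `∃K Γ`: it may replace `Γ` if `φ` is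
over `K`, and in any case goals may be proved from `E` and `Δ` assuming a critical sequent, at the
expense of enlarging `Δ`. -/
structure Splits (K : Set (Bool × ℕ)) (Γ : Multiset Fm) (E : Fm) (Δ : Multiset Fm) (φ : Fm) :
    Prop where
  derivable : φ.signedAtoms ⊆ K → E ::ₘ Δ ⊢ φ
  of_critical : ∀ χ, (∀ Θ, Δ ⊆ Θ → contextAtoms Θ ⊆ flipSigns K → Critical Γ Θ φ → E ::ₘ Θ ⊢ χ) →
    E ::ₘ Δ ⊢ χ

namespace Splits

variable {a b : Fm}

theorem of_decomposes {Ns : List (Multiset Fm)} (hΓ : FullyDecomposed Γ) (ha : Decomposes a Ns)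
    (hΘ : a ::ₘ Θ ⊆ Γ + Δ) (hΔ : contextAtoms Δ ⊆ flipSigns K)
    (ih : ∀ N ∈ Ns, ∀ Δ, N + Θ ⊆ Γ + Δ → contextAtoms Δ ⊆ flipSigns K → Splits K Γ E Δ φ) :
    Splits K Γ E Δ φ := by
  obtain ⟨haΓΔ, hΘ⟩ := Multiset.cons_subset.1 hΘ
  have haΔ : a ∈ Δ := (Multiset.mem_add.1 haΓΔ).resolve_left fun h => hΓ a h Ns ha
  have hsplits : ∀ N ∈ Ns, Splits K Γ E (N + Δ) φ := fun N hN => ih N hN _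
    (fun γ hγ => by
      have := @hΘ γ
      simp only [Multiset.mem_add] at this hγ ⊢
      tauto)
    (by
      rw [contextAtoms_add]
      exact Set.union_subset ((ha.contextAtoms_subset hN).trans
        ((signedAtoms_subset_contextAtoms haΔ).trans hΔ)) hΔ)
  have left {χ : Fm} (h : ∀ N ∈ Ns, E ::ₘ (N + Δ) ⊢ χ) : E ::ₘ Δ ⊢ χ :=
    G3.contract (ha.left fun N hN => Multiset.add_cons E N Δ ▸ h N hN)
      (Multiset.mem_cons_of_mem haΔ)
  exact ⟨fun hφ => left fun N hN => (hsplits N hN).derivable hφ,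
    fun χ hχ => left fun N hN => (hsplits N hN).of_critical χ fun _ hNΔ => hχ _
      (Multiset.Subset.trans Multiset.subset_add_right hNΔ)⟩

theorem of_imp_mem_right (hΔ : contextAtoms Δ ⊆ flipSigns K) (hab : a.imp b ∈ Δ)
    (ha : Splits K Γ E Δ a)
    (hb : contextAtoms (b ::ₘ Δ) ⊆ flipSigns K → Splits K Γ E (b ::ₘ Δ) φ) :
    Splits K Γ E Δ φ := by
  have hK := (signedAtoms_subset_contextAtoms hab).trans hΔ
  rw [Fm.signedAtoms_imp, Set.union_subset_iff] at hK
  have haK : a.signedAtoms ⊆ K := by simpa using flipSigns_subset_comm.1 hK.1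
  have hb := hb (contextAtoms_cons b Δ ▸ Set.union_subset hK.2 hΔ)
  have left {χ : Fm} (hχ : E ::ₘ b ::ₘ Δ ⊢ χ) : E ::ₘ Δ ⊢ χ :=
    .of_imp_mem (Multiset.mem_cons_of_mem hab) (ha.derivable haK)
      (Multiset.cons_swap E b Δ ▸ hχ)
  exact ⟨fun hφ => left (hb.derivable hφ), fun χ hχ => left <| hb.of_critical χ fun _ hΘ =>
    hχ _ (Multiset.Subset.trans (Multiset.subset_cons Δ b) hΘ)⟩

theorem of_rightDerivable (hΔ : contextAtoms Δ ⊆ flipSigns K) (h : RightDerivable (Γ + Δ) φ)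
    (hφ : φ.signedAtoms ⊆ K → E ::ₘ Δ ⊢ φ) : Splits K Γ E Δ φ where
  derivable := hφ
  of_critical _ hχ := hχ Δ (Multiset.Subset.refl Δ) hΔ (.inl h)

theorem of_imp_mem_left (hE : ∀ γ ∈ Γ, AbsorbsLeft K Γ γ E) (hab : a.imp b ∈ Γ)
    (ha : Splits K Γ E Δ a) (hφ : Γ + Δ ⊢ φ) : Splits K Γ E Δ φ where
  derivable hφK := ha.of_critical φ fun Θ hΔ hΘ hcrit => by
    obtain ⟨a', b', hmem, hright⟩ : ∃ a' b' : Fm, a'.imp b' ∈ Γ ∧ RightDerivable (Γ + Θ) a' :=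
      hcrit.elim (fun h => ⟨a, b, hab, h⟩) id
    exact hE _ hmem Θ φ hΘ hφK ⟨hright, hφ.mono (add_subset_add_left hΔ)⟩
  of_critical χ hχ := ha.of_critical χ fun Θ hΔ hΘ hcrit =>
    hχ Θ hΔ hΘ <| .inr <| hcrit.elim (fun h => ⟨a, b, hab, h⟩) id

theorem atom {q : ℕ} (hE : ∀ γ ∈ Γ, AbsorbsLeft K Γ γ E) (hΔ : contextAtoms Δ ⊆ flipSigns K)
    (hq : .atom q ∈ Γ + Δ) : Splits K Γ E Δ (.atom q) :=
  of_rightDerivable hΔ hq fun hK => (Multiset.mem_add.1 hq).elim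
    (fun hq => hE _ hq Δ _ hΔ hK rfl)
    (fun hq => .atom_of_mem (Multiset.mem_cons_of_mem hq))

theorem box (hE : ∀ γ ∈ Γ, AbsorbsLeft K Γ γ E) (hΔ : contextAtoms Δ ⊆ flipSigns K)
    (ha : a.box ∈ Γ + Δ) (h : {a} ⊢ b) : Splits K Γ E Δ b.box :=
  of_rightDerivable hΔ ⟨a, ha, h⟩ fun hK => (Multiset.mem_add.1 ha).elim
    (fun ha => hE _ ha Δ _ hΔ hK ⟨b, rfl, h⟩)
    (fun ha => .box_of_mem (Multiset.mem_cons_of_mem ha) h)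

theorem imp (hΔ : contextAtoms Δ ⊆ flipSigns K) (h : a ::ₘ (Γ + Δ) ⊢ b)
    (hb : contextAtoms (a ::ₘ Δ) ⊆ flipSigns K → Splits K Γ E (a ::ₘ Δ) b) :
    Splits K Γ E Δ (a.imp b) :=
  of_rightDerivable hΔ h fun hK => by
    rw [Fm.signedAtoms_imp, Set.union_subset_iff, flipSigns_subset_comm] at hK
    have hb := hb (contextAtoms_cons a Δ ▸ Set.union_subset hK.1 hΔ)
    exact .rimp _ a b (Multiset.cons_swap E a Δ ▸ hb.derivable hK.2)

end Splits

theorem splits_of_derivable (hΓ : FullyDecomposed Γ) (hE : ∀ γ ∈ Γ, AbsorbsLeft K Γ γ E)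
    (h : Θ ⊢ φ) (hΘ : Θ ⊆ Γ + Δ) (hΔ : contextAtoms Δ ⊆ flipSigns K) : Splits K Γ E Δ φ := by
  induction h generalizing Δ with
  | ax Θ p => exact .atom hE hΔ (hΘ (Multiset.mem_cons_self _ Θ))
  | lbot Θ φ => exact .of_decomposes hΓ .bot hΘ hΔ (by simp)
  | land Θ a b φ _ ih =>
    refine .of_decomposes hΓ (.and a b) hΘ hΔ ?_
    simp only [List.forall_mem_singleton, Multiset.insert_eq_cons, Multiset.cons_add,
      Multiset.singleton_add]
    exact fun _ => ih
  | rand Θ a b ha hb ih₁ ih₂ =>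
    refine .of_rightDerivable hΔ ⟨ha.mono hΘ, hb.mono hΘ⟩ fun hK => ?_
    obtain ⟨haK, hbK⟩ := Set.union_subset_iff.1 (Fm.signedAtoms_and a b ▸ hK)
    exact .rand _ a b ((ih₁ hΘ hΔ).derivable haK) ((ih₂ hΘ hΔ).derivable hbK)
  | lor Θ a b φ _ _ ih₁ ih₂ =>
    refine .of_decomposes hΓ (.or a b) hΘ hΔ ?_
    simp only [List.forall_mem_cons, Multiset.singleton_add]
    exact ⟨fun _ => ih₁, fun _ => ih₂, by simp⟩
  | ror₁ Θ a b h ih =>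
    refine .of_rightDerivable hΔ (.inl (h.mono hΘ)) fun hK => ?_
    rw [Fm.signedAtoms_or, Set.union_subset_iff] at hK
    exact .ror₁ _ a b ((ih hΘ hΔ).derivable hK.1)
  | ror₂ Θ a b h ih =>
    refine .of_rightDerivable hΔ (.inr (h.mono hΘ)) fun hK => ?_
    rw [Fm.signedAtoms_or, Set.union_subset_iff] at hK
    exact .ror₂ _ a b ((ih hΘ hΔ).derivable hK.2)
  | limp Θ a b φ ha hb ih₁ ih₂ =>
    have hφ := (G3.limp Θ a b φ ha hb).mono hΘ
    have hsplit := ih₁ hΘ hΔ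
    obtain ⟨h, hΘ⟩ := Multiset.cons_subset.1 hΘ
    obtain h | h := Multiset.mem_add.1 h
    · exact .of_imp_mem_left hE h hsplit hφ
    · exact .of_imp_mem_right hΔ h hsplit
        (ih₂ (Multiset.add_cons b Γ Δ ▸ Multiset.cons_subset_cons hΘ))
  | rimp Θ a b h ih =>
    exact .imp hΔ (h.mono (Multiset.cons_subset_cons hΘ))
      (ih (Multiset.add_cons a Γ Δ ▸ Multiset.cons_subset_cons hΘ))
  | m Θ a b h _ => exact .box hE hΔ (hΘ (Multiset.mem_cons_self _ Θ)) h

/-! ### Existence of uniform interpolants -/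

theorem IsExistsInterpolant.absorbsLeft (h : IsExistsInterpolant K Γ E) {γ : Fm} (hγ : γ ∈ Γ) :
    AbsorbsLeft K Γ γ E :=
  fun Δ χ hΔ hχ hleft => h.least Δ χ hΔ hχ (hleft.derivable hγ)

/-- The contribution of `γ ∈ Γ` to `∃K Γ`, which is the conjunction of all of them. -/
structure IsExistsPiece (K : Set (Bool × ℕ)) (Γ : Multiset Fm) (γ E : Fm) : Prop where
  atoms : E.signedAtoms ⊆ K ∩ contextAtoms Γ
  derivable : Γ ⊢ E
  absorbsLeft : AbsorbsLeft K Γ γ E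

/-- The contribution of an implication `γ ∈ Γ` to `∀K (Γ ⇒ φ)`: it covers the sequents in which
the left premise for `γ` has a derivation ending on the right. Members of `Γ` that are not
implications need not contribute. -/
structure IsForallPiece (K : Set (Bool × ℕ)) (Γ : Multiset Fm) (φ γ A : Fm) : Prop where
  atoms : A.signedAtoms ⊆ K ∩ (flipSigns (contextAtoms Γ) ∪ φ.signedAtoms)
  derivable : A ::ₘ Γ ⊢ φ
  greatest : ∀ a b Δ, γ = a.imp b → contextAtoms Δ ⊆ K → RightDerivable (Γ + Δ) a →
    Γ + Δ ⊢ φ → Δ ⊢ A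

theorem exists_isExistsInterpolant_of_pieces (hΓ : FullyDecomposed Γ)
    (hpieces : ∀ γ ∈ Γ, ∃ E, IsExistsPiece K Γ γ E) :
    ∃ E, IsExistsInterpolant K Γ E := by
  have : Nonempty Fm := ⟨.bot⟩
  choose! E hE using hpieces
  refine ⟨.conj (Γ.toList.map E), Fm.signedAtoms_conj_subset ?_, G3.conj_iff.2 ?_,
    fun Δ χ hΔ hχ h => ?_⟩
  · simpa using fun γ hγ => (hE γ hγ).atoms
  · simpa using fun γ hγ => (hE γ hγ).derivable
  have hconj : ∀ γ ∈ Γ, AbsorbsLeft K Γ γ (.conj (Γ.toList.map E)) := fun γ hγ Θ θ hΘ hθ hleft =>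
    (G3.conj_iff.1 (.head _ Θ) (E γ) (List.mem_map_of_mem (Multiset.mem_toList.2 hγ))).cut
      (((hE γ hγ).absorbsLeft Θ θ hΘ hθ hleft).mono
        (Multiset.cons_subset_cons (Multiset.subset_cons Θ _)))
  exact (splits_of_derivable hΓ hconj h (Multiset.Subset.refl _) hΔ).derivable hχ

theorem exists_isForallInterpolant_of_pieces (hΓ : FullyDecomposed Γ)
    (hE : IsExistsInterpolant (flipSigns K) Γ E) (hB : IsRightInterpolant K Γ φ B)
    (hpieces : ∀ γ ∈ Γ, ∃ A, IsForallPiece K Γ φ γ A) :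
    ∃ A, IsForallInterpolant K Γ φ A := by
  have : Nonempty Fm := ⟨.bot⟩
  choose! A hA using hpieces
  let D := Fm.disj (B :: Γ.toList.map A)
  have hD : D.signedAtoms ⊆ K ∩ (flipSigns (contextAtoms Γ) ∪ φ.signedAtoms) :=
    Fm.signedAtoms_disj_subset <| List.forall_mem_cons.2 ⟨hB.atoms, by
      simpa using fun γ hγ => (hA γ hγ).atoms⟩
  refine ⟨E.imp D, ?_, ?_, fun Δ hΔ h => .rimp Δ E D ?_⟩
  · rw [Fm.signedAtoms_imp]
    refine Set.union_subset (flipSigns_subset_comm.2 (hE.atoms.trans ?_)) hD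
    grind [flipSigns_union, flipSigns_inter, flipSigns_flipSigns]
  · refine .limp Γ E D φ (hE.derivable.weaken _) (.disj_left ?_)
    exact List.forall_mem_cons.2 ⟨hB.derivable, by
      simpa using fun γ hγ => (hA γ hγ).derivable⟩
  · have hsplits : Splits (flipSigns K) Γ E Δ φ :=
      splits_of_derivable hΓ (fun _ => hE.absorbsLeft) h (Multiset.Subset.refl _) (by simpa)
    refine hsplits.of_critical D fun Θ hΔΘ hΘ hcrit => .weaken ?_ E
    rw [flipSigns_flipSigns] at hΘ
    obtain hright | ⟨a, b, hab, hright⟩ := hcrit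
    · exact .disj_of_mem (List.mem_cons_self ..) (hB.greatest Θ hΘ hright)
    · exact .disj_of_mem (List.mem_cons_of_mem B <| List.mem_map_of_mem <|
        Multiset.mem_toList.2 hab) ((hA _ hab).greatest a b Θ rfl hΘ hright
        (h.mono (add_subset_add_left hΔΘ)))

theorem exists_isRightInterpolant_atom (K : Set (Bool × ℕ)) (Γ : Multiset Fm) (q : ℕ) :
    ∃ B, IsRightInterpolant K Γ (.atom q) B := by
  by_cases hqΓ : .atom q ∈ Γ
  · exact ⟨.top, by simp, .atom_of_mem (Multiset.mem_cons_of_mem hqΓ), fun Δ _ _ => .top Δ⟩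
  by_cases hqK : (true, q) ∈ K
  · exact ⟨.atom q, by simp [hqK], .head _ Γ, fun Δ _ hq =>
      .atom_of_mem ((Multiset.mem_add.1 hq).resolve_left hqΓ)⟩
  · refine ⟨.bot, by simp, .lbot Γ _, fun Δ hΔ hq => absurd ?_ hqK⟩
    have hqΔ := (Multiset.mem_add.1 hq).resolve_left hqΓ
    simpa using (signedAtoms_subset_contextAtoms hqΔ).trans hΔ

theorem exists_isRightInterpolant_box (h : IsForallInterpolant K 0 φ A) (Γ : Multiset Fm) :
    ∃ B, IsRightInterpolant K Γ φ.box B := by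
  by_cases hΓ : ∃ δ : Fm, δ.box ∈ Γ ∧ {δ} ⊢ φ
  · obtain ⟨δ, hδ, hφ⟩ := hΓ
    exact ⟨.top, by simp, .box_of_mem (Multiset.mem_cons_of_mem hδ) hφ, fun Δ _ _ => .top Δ⟩
  · refine ⟨A.box, ?_, .box_mono h.derivable, fun Δ hΔ hφ => ?_⟩
    · rw [Fm.signedAtoms_box, Fm.signedAtoms_box]
      refine h.atoms.trans (Set.inter_subset_inter_right K ?_)
      simp
    · obtain ⟨δ, hδ, hδφ⟩ := hφ
      have hδΔ := (Multiset.mem_add.1 hδ).resolve_left fun hδΓ => hΓ ⟨δ, hδΓ, hδφ⟩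
      refine .box_of_mem hδΔ (h.greatest {δ} ?_ (by simpa using hδφ))
      simpa using (signedAtoms_subset_contextAtoms hδΔ).trans hΔ

theorem isRightInterpolant_bot (K : Set (Bool × ℕ)) (Γ : Multiset Fm) :
    IsRightInterpolant K Γ .bot .bot :=
  ⟨by simp, .head _ Γ, fun _ _ h => h.elim⟩

theorem IsForallInterpolant.or_isRightInterpolant (hφ : IsForallInterpolant K Γ φ A₁)
    (hψ : IsForallInterpolant K Γ ψ A₂) : IsRightInterpolant K Γ (φ.or ψ) (A₁.or A₂) where
  atoms := by
    have := hφ.atoms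
    have := hψ.atoms
    grind [Fm.signedAtoms_or]
  derivable := .lor Γ A₁ A₂ _ (.ror₁ _ φ ψ hφ.derivable) (.ror₂ _ φ ψ hψ.derivable)
  greatest Δ hΔ h := h.elim (fun h => .ror₁ Δ A₁ A₂ (hφ.greatest Δ hΔ h))
    (fun h => .ror₂ Δ A₁ A₂ (hψ.greatest Δ hΔ h))

theorem exists_isExistsPiece_atom (K : Set (Bool × ℕ)) (Γ : Multiset Fm) (q : ℕ) :
    ∃ E, IsExistsPiece K (.atom q ::ₘ Γ) (.atom q) E := by
  by_cases hq : (true, q) ∈ K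
  · refine ⟨.atom q, by simp [hq], .head _ Γ, ?_⟩
    rintro Δ _ - - rfl
    exact .head _ Δ
  · refine ⟨.top, by simp, .top _, ?_⟩
    rintro Δ _ - hqK rfl
    simp [hq] at hqK

theorem IsExistsInterpolant.box_isExistsPiece (hE : IsExistsInterpolant K {φ} E) (Γ : Multiset Fm) :
    IsExistsPiece K (φ.box ::ₘ Γ) φ.box E.box where
  atoms := by
    rw [Fm.signedAtoms_box]
    refine hE.atoms.trans (Set.inter_subset_inter_right K ?_)
    simp
  derivable := .box_mono hE.derivable
  absorbsLeft := by
    rintro Δ _ - hψ ⟨ψ, rfl, h⟩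
    exact .box_mono (hE.least 0 ψ (by simp) (by simpa using hψ) (by simpa using h))

theorem IsExistsInterpolant.imp_isExistsPiece {a b : Fm} (hE : IsExistsInterpolant K (b ::ₘ Γ) E)
    (hB : IsRightInterpolant (flipSigns K) (a.imp b ::ₘ Γ) a B) :
    IsExistsPiece K (a.imp b ::ₘ Γ) (a.imp b) (B.imp E) where
  atoms := by
    rw [Fm.signedAtoms_imp]
    refine Set.union_subset (flipSigns_subset_comm.2 (hB.atoms.trans ?_)) (hE.atoms.trans ?_) <;>
      grind [flipSigns_union, flipSigns_inter, flipSigns_flipSigns, contextAtoms_cons,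
        Fm.signedAtoms_imp]
  derivable := by
    refine .rimp _ B E (Multiset.cons_swap B _ Γ ▸ .limp _ a b E ?_ ?_)
    · exact Multiset.cons_swap B _ Γ ▸ hB.derivable
    · exact Multiset.cons_swap b B Γ ▸ hE.derivable.weaken B
  absorbsLeft := by
    rintro Δ χ hΔ hχ ⟨ha, h⟩
    rw [Multiset.cons_add] at h
    have hB := hB.greatest Δ hΔ ha
    have hE := hE.least Δ χ hΔ hχ (Multiset.cons_add b Γ Δ ▸ h.invert_imp)
    exact .limp Δ B E χ (hB.weaken _) hE

theorem IsForallInterpolant.imp_isForallPiece {a b : Fm} (hA : IsForallInterpolant K (b ::ₘ Γ) φ A)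
    (hB : IsRightInterpolant K (a.imp b ::ₘ Γ) a B) :
    IsForallPiece K (a.imp b ::ₘ Γ) φ (a.imp b) (B.and A) where
  atoms := by
    rw [Fm.signedAtoms_and]
    refine Set.union_subset (hB.atoms.trans ?_) (hA.atoms.trans ?_) <;>
      grind [flipSigns_union, contextAtoms_cons, Fm.signedAtoms_imp, flipSigns_flipSigns]
  derivable := by
    have ha : B ::ₘ A ::ₘ a.imp b ::ₘ Γ ⊢ a :=
      hB.derivable.mono (Multiset.cons_subset_cons (Multiset.subset_cons _ A))
    have hφ : b ::ₘ B ::ₘ A ::ₘ a.imp b ::ₘ Γ ⊢ φ :=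
      hA.derivable.mono (by grind [Multiset.subset_iff])
    exact .land _ B A φ (.of_imp_mem (by simp) ha hφ)
  greatest := by
    rintro _ _ Δ ⟨⟩ hΔ ha h
    rw [Multiset.cons_add] at h
    exact .rand Δ B A (hB.greatest Δ hΔ ha)
      (hA.greatest Δ hΔ (Multiset.cons_add b Γ Δ ▸ h.invert_imp))

/-- All contexts and sequents of weight below `n` have uniform interpolants. -/
structure HasInterpolantsBelow (n : ℕ) : Prop where
  existsInterpolant : ∀ K Γ, weight Γ < n → ∃ E, IsExistsInterpolant K Γ E
  forallInterpolant : ∀ K Γ φ, weight (φ ::ₘ Γ) < n → ∃ A, IsForallInterpolant K Γ φ A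

namespace HasInterpolantsBelow

variable {n k : ℕ}

theorem mono (h : HasInterpolantsBelow n) (hk : k ≤ n) : HasInterpolantsBelow k :=
  ⟨fun K Γ hΓ => h.existsInterpolant K Γ (hΓ.trans_le hk),
    fun K Γ φ hφ => h.forallInterpolant K Γ φ (hφ.trans_le hk)⟩

theorem exists_isExistsInterpolant_cons (h : HasInterpolantsBelow (weight (φ ::ₘ Γ)))
    (hψ : ψ.degree < φ.degree) (K : Set (Bool × ℕ)) : ∃ E, IsExistsInterpolant K (ψ ::ₘ Γ) E :=
  h.existsInterpolant K (ψ ::ₘ Γ) (weight_add_lt (N := {ψ}) (by simp) (by simpa))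

theorem exists_isExistsInterpolant_singleton (h : HasInterpolantsBelow (weight (φ ::ₘ Γ)))
    (hψ : ψ.degree < φ.degree) (K : Set (Bool × ℕ)) : ∃ E, IsExistsInterpolant K {ψ} E := by
  have hle : weight (φ ::ₘ 0) ≤ weight (φ ::ₘ Γ) := by simp [weight]
  exact (h.mono hle).exists_isExistsInterpolant_cons hψ K

theorem exists_isForallInterpolant_add {N : Multiset Fm}
    (h : HasInterpolantsBelow (weight (φ ::ₘ Γ))) (hcard : N.card ≤ 2)
    (hN : ∀ ν ∈ ψ ::ₘ N, ν.degree < φ.degree) (K : Set (Bool × ℕ)) :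
    ∃ A, IsForallInterpolant K (N + Γ) ψ A :=
  h.forallInterpolant K (N + Γ) ψ <| Multiset.cons_add ψ N Γ ▸
    weight_add_lt (by simpa using Nat.lt_succ_of_le hcard) hN

theorem exists_isForallInterpolant_zero (h : HasInterpolantsBelow (weight (φ ::ₘ Γ)))
    (hψ : ψ.degree < φ.degree) (K : Set (Bool × ℕ)) : ∃ A, IsForallInterpolant K 0 ψ A := by
  have hle : weight (φ ::ₘ 0) ≤ weight (φ ::ₘ Γ) := by simp [weight]
  simpa using (h.mono hle).exists_isForallInterpolant_add (N := 0) (by simp) (by simpa) K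

theorem exists_isRightInterpolant (h : HasInterpolantsBelow (weight (φ ::ₘ Γ)))
    (K : Set (Bool × ℕ)) : ∃ B, IsRightInterpolant K Γ φ B := by
  have ih {ψ : Fm} (hψ : ψ.degree < φ.degree) : ∃ A, IsForallInterpolant K Γ ψ A := by
    simpa using h.exists_isForallInterpolant_add (N := 0) (by simp) (by simpa) K
  cases φ with
  | atom q => exact exists_isRightInterpolant_atom K Γ q
  | bot => exact ⟨.bot, isRightInterpolant_bot K Γ⟩
  | and φ ψ =>
    obtain ⟨_, hφ⟩ := ih (ψ := φ) (by simp only [Fm.degree]; omega)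
    obtain ⟨_, hψ⟩ := ih (ψ := ψ) (by simp only [Fm.degree]; omega)
    exact ⟨_, (hφ.and hψ).isRightInterpolant⟩
  | or φ ψ =>
    obtain ⟨_, hφ⟩ := ih (ψ := φ) (by simp only [Fm.degree]; omega)
    obtain ⟨_, hψ⟩ := ih (ψ := ψ) (by simp only [Fm.degree]; omega)
    exact ⟨_, hφ.or_isRightInterpolant hψ⟩
  | imp φ ψ =>
    obtain ⟨_, hψ⟩ := h.exists_isForallInterpolant_add (N := {φ}) (ψ := ψ) (by simp)
      (by simp [Fm.degree]) K
    exact ⟨_, hψ.imp.isRightInterpolant⟩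
  | box φ =>
    obtain ⟨_, hφ⟩ := h.exists_isForallInterpolant_zero (ψ := φ) (by simp [Fm.degree]) K
    exact exists_isRightInterpolant_box hφ Γ

theorem exists_isRightInterpolant_antecedent {a b : Fm}
    (h : HasInterpolantsBelow (weight (a.imp b ::ₘ Γ))) (hΓ : FullyDecomposed (a.imp b ::ₘ Γ))
    (K : Set (Bool × ℕ)) : ∃ B, IsRightInterpolant K (a.imp b ::ₘ Γ) a B := by
  cases a with
  | atom q => exact exists_isRightInterpolant_atom K _ q
  | bot => exact ⟨.bot, isRightInterpolant_bot K _⟩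
  | and c d => cases hΓ _ (Multiset.mem_cons_self _ Γ) _ (.and_imp c d b)
  | or c d => cases hΓ _ (Multiset.mem_cons_self _ Γ) _ (.or_imp c d b)
  | box c =>
    obtain ⟨_, hc⟩ := h.exists_isForallInterpolant_zero (ψ := c)
      (by simp only [Fm.degree]; omega) K
    exact exists_isRightInterpolant_box hc _
  | imp c d =>
    -- Once `c` is assumed, `(c → d) → b` may be replaced by `d → b`.
    obtain ⟨A, hA⟩ := h.exists_isForallInterpolant_add (N := {c, d.imp b}) (ψ := d) (by simp)
      (by grind [Fm.degree, Multiset.insert_eq_cons, Multiset.mem_singleton]) K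
    have hdb : c ::ₘ (c.imp d).imp b ::ₘ Γ ⊢ d.imp b := .rimp _ d b <|
      .mp (.identity (by simp)) (.rimp _ c d (.identity (by simp)))
    have hb : {c, d.imp b} + Γ ⊢ (c.imp d).imp b := .rimp _ _ b <|
      .mp (φ := d) (.identity (by simp)) (.mp (φ := c) (.identity (by simp)) (.identity (by simp)))
    refine ⟨A, (IsForallInterpolant.imp (hA.congr ?_ ?_ ?_)).isRightInterpolant⟩
    · simp only [Multiset.insert_eq_cons, Multiset.cons_add, Multiset.singleton_add,
        Multiset.forall_mem_cons]
      exact ⟨.head c _, hdb, fun γ hγ => .identity (by simp [hγ])⟩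
    · simp only [Multiset.forall_mem_cons]
      exact ⟨.identity (by simp), hb, fun γ hγ => .identity (by simp [hγ])⟩
    · rw [contextAtoms_add]
      grind [Multiset.insert_eq_cons, contextAtoms_cons, contextAtoms_singleton, flipSigns_union,
        flipSigns_flipSigns, Fm.signedAtoms_imp]

theorem exists_isExistsPiece (h : HasInterpolantsBelow (weight Γ)) (hΓ : FullyDecomposed Γ)
    (K : Set (Bool × ℕ)) {γ : Fm} (hγ : γ ∈ Γ) : ∃ E, IsExistsPiece K Γ γ E := by
  obtain ⟨Γ, rfl⟩ := Multiset.exists_cons_of_mem hγ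
  cases γ with
  | atom q => exact exists_isExistsPiece_atom K Γ q
  | box φ =>
    obtain ⟨E, hE⟩ := h.exists_isExistsInterpolant_singleton (ψ := φ) (by simp [Fm.degree]) K
    exact ⟨E.box, hE.box_isExistsPiece Γ⟩
  | imp a b =>
    obtain ⟨B, hB⟩ := h.exists_isRightInterpolant_antecedent hΓ (flipSigns K)
    obtain ⟨E, hE⟩ := h.exists_isExistsInterpolant_cons (ψ := b) (by simp only [Fm.degree]; omega) K
    exact ⟨B.imp E, hE.imp_isExistsPiece hB⟩
  | _ => exact ⟨.top, by simp, .top _, fun _ _ _ _ h => h.elim⟩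

theorem exists_isForallPiece (h : HasInterpolantsBelow (weight (φ ::ₘ Γ)))
    (hΓ : FullyDecomposed Γ) (K : Set (Bool × ℕ)) {γ : Fm} (hγ : γ ∈ Γ) :
    ∃ A, IsForallPiece K Γ φ γ A := by
  obtain ⟨Γ, rfl⟩ := Multiset.exists_cons_of_mem hγ
  by_cases himp : ∃ a b : Fm, γ = a.imp b
  · obtain ⟨a, b, rfl⟩ := himp
    have hle : weight (a.imp b ::ₘ Γ) ≤ weight (φ ::ₘ a.imp b ::ₘ Γ) := by
      simp [weight_cons φ]
    obtain ⟨B, hB⟩ := (h.mono hle).exists_isRightInterpolant_antecedent hΓ K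
    obtain ⟨A, hA⟩ := h.forallInterpolant K (b ::ₘ Γ) φ <| by
      rw [weight_cons φ, weight_cons φ]
      exact Nat.add_lt_add_left
        (weight_add_lt (N := {b}) (by simp) (by simp [Fm.degree])) _
    exact ⟨B.and A, hA.imp_isForallPiece hB⟩
  · exact ⟨.bot, by simp, .lbot _ φ, fun a b _ hab => (himp ⟨a, b, hab⟩).elim⟩

end HasInterpolantsBelow

theorem hasInterpolantsBelow (n : ℕ) : HasInterpolantsBelow n := by
  induction n with
  | zero =>
    exact ⟨fun _ _ h => (Nat.not_lt_zero _ h).elim, fun _ _ _ h => (Nat.not_lt_zero _ h).elim⟩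
  | succ n ih =>
    have hE (K Γ) (hn : weight Γ ≤ n) : ∃ E, IsExistsInterpolant K Γ E := by
      by_cases hΓ : FullyDecomposed Γ
      · exact exists_isExistsInterpolant_of_pieces hΓ fun _ =>
          (ih.mono hn).exists_isExistsPiece hΓ K
      · obtain ⟨γ, hγ, Ns, hNs⟩ : ∃ γ ∈ Γ, ∃ Ns, Decomposes γ Ns := by
          simpa [FullyDecomposed] using hΓ
        obtain ⟨Γ, rfl⟩ := Multiset.exists_cons_of_mem hγ
        exact exists_isExistsInterpolant_of_decomposes hNs fun N hN =>
          ih.existsInterpolant K _ ((hNs.weight_lt hN Γ).trans_le hn)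
    refine ⟨fun K Γ hn => hE K Γ (Nat.le_of_lt_succ hn), fun K Γ φ hn => ?_⟩
    have hn := Nat.le_of_lt_succ hn
    by_cases hΓ : FullyDecomposed Γ
    · have hle : weight Γ ≤ weight (φ ::ₘ Γ) := by simp [weight_cons]
      obtain ⟨E, hE⟩ := hE (flipSigns K) Γ (hle.trans hn)
      obtain ⟨B, hB⟩ := (ih.mono hn).exists_isRightInterpolant K
      exact exists_isForallInterpolant_of_pieces hΓ hE hB fun _ =>
        (ih.mono hn).exists_isForallPiece hΓ K
    · obtain ⟨γ, hγ, Ns, hNs⟩ : ∃ γ ∈ Γ, ∃ Ns, Decomposes γ Ns := by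
        simpa [FullyDecomposed] using hΓ
      obtain ⟨Γ, rfl⟩ := Multiset.exists_cons_of_mem hγ
      refine exists_isForallInterpolant_of_decomposes hNs fun N hN => ih.forallInterpolant K _ φ ?_
      have := hNs.weight_lt hN Γ
      simp only [weight_cons φ] at hn ⊢
      omega

theorem exists_isExistsInterpolant (K : Set (Bool × ℕ)) (Γ : Multiset Fm) :
    ∃ E, IsExistsInterpolant K Γ E :=
  (hasInterpolantsBelow _).existsInterpolant K Γ (Nat.lt_succ_self _)

theorem exists_isForallInterpolant (K : Set (Bool × ℕ)) (Γ : Multiset Fm) (φ : Fm) :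
    ∃ A, IsForallInterpolant K Γ φ A :=
  (hasInterpolantsBelow _).forallInterpolant K Γ φ (Nat.lt_succ_self _)

theorem iM_imp_iff : iM (φ.imp ψ) ↔ {φ} ⊢ ψ :=
  G3.imp_iff

theorem Vb_subset_of_signedAtoms_subset (h : φ.signedAtoms ⊆ ψ.signedAtoms) (b : Bool) :
    Vb b φ ⊆ Vb b ψ :=
  fun q hq => @h (b, q) hq

theorem iM_ULIP_general (φ : Fm) (K : Set (Bool × ℕ)) : ∃ E A : Fm,
    E.signedAtoms ⊆ K ∩ φ.signedAtoms ∧ A.signedAtoms ⊆ K ∩ φ.signedAtoms ∧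
    iM (φ.imp E) ∧ (∀ ψ : Fm, ψ.signedAtoms ⊆ K → iM (φ.imp ψ) → iM (E.imp ψ)) ∧
    iM (A.imp φ) ∧ (∀ ψ : Fm, ψ.signedAtoms ⊆ K → iM (ψ.imp φ) → iM (ψ.imp A)) := by
  simp only [iM_imp_iff]
  obtain ⟨E, hE⟩ := exists_isExistsInterpolant K {φ}
  obtain ⟨A, hA⟩ := exists_isForallInterpolant K 0 φ
  refine ⟨E, A, ?_, ?_, hE.derivable, fun ψ hψ h => ?_, hA.derivable, fun ψ hψ h => ?_⟩
  · simpa using hE.atoms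
  · simpa using hA.atoms
  · exact hE.least 0 ψ (by simp) hψ (by simpa using h)
  · exact hA.greatest {ψ} (by simpa using hψ) (by simpa using h)

/-- `iM` has the uniform Lyndon interpolation property: for every formula `φ`,
atom `p` and polarity `o` there are `p∘`-free formulas `E = ∃∘p φ` and
`A = ∀∘p φ`, with variables of each polarity among those of `φ`, such that
`iM ⊢ φ → E`, `iM ⊢ A → φ`, and for every `p∘`-free `ψ`:
`iM ⊢ φ → ψ` implies `iM ⊢ E → ψ`, and `iM ⊢ ψ → φ` implies `iM ⊢ ψ → A`. -/
theorem iM_ULIP :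
    ∀ (φ : Fm) (p : ℕ) (o : Bool), ∃ E A : Fm,
      p ∉ Vb o E ∧ p ∉ Vb o A ∧
      (∀ b, Vb b E ⊆ Vb b φ) ∧ (∀ b, Vb b A ⊆ Vb b φ) ∧
      iM (φ.imp E) ∧
      (∀ ψ, p ∉ Vb o ψ → iM (φ.imp ψ) → iM (E.imp ψ)) ∧
      iM (A.imp φ) ∧
      (∀ ψ, p ∉ Vb o ψ → iM (ψ.imp φ) → iM (ψ.imp A)) := by
  intro φ p o
  have hfree (ψ : Fm) : ψ.signedAtoms ⊆ {(o, p)}ᶜ ↔ p ∉ Vb o ψ := Set.subset_compl_singleton_iff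
  obtain ⟨E, A, hE, hA, hφE, hE_least, hAφ, hA_greatest⟩ := iM_ULIP_general φ {(o, p)}ᶜ
  simp only [Set.subset_inter_iff, hfree] at hE hA hE_least hA_greatest
  exact ⟨E, A, hE.1, hA.1, Vb_subset_of_signedAtoms_subset hE.2,
    Vb_subset_of_signedAtoms_subset hA.2, hφE, hE_least, hAφ, hA_greatest⟩
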